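/- Let β > 0, let (x_k)_{k≥1} be nonnegative differentiable functions on [0,∞) with x_k(0) = 0, and let (r_k)_{k≥1}, (α_k)_{k≥1} be constants with r_k ≥ 0 and α_k > 0, such that for every k ≥ 1 and every t ≥ 0 one has x_k'(t) ≤ β·k·(α_k·x_{k+1}(t) − x_k(t)) + r_k. Then for all integers j ≥ 1, ℓ ≥ 1 and all t ≥ 0: x_j(t) ≤ A^ℓ_j · I^ℓ_j(t) · sup_{s ∈ [0,t]} x_{j+ℓ}(s) + (1/β) · Σ_{k=0}^{ℓ-1} A^{k+1}_j · I^{k+1}_j(t) · r_{j+k} / (α_{j+k}·(j+k)), where A^k_j := Π_{i=j}^{j+k-1} α_i (with A^0_j := 1). -/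

import Mathlib

open MeasureTheory

/-- The nested integral `∫₀^t ∫₀^{s_ℓ} ⋯ ∫₀^{s_2} e^{-β(s_2+⋯+s_ℓ)} e^{a s_1} ds_1 ⋯ ds_ℓ`,
defined recursively in the number `ℓ` of integrations. -/
noncomputable def nestInt (β a : ℝ) : ℕ → ℝ → ℝ
  | 0, _ => 1
  | 1, t => ∫ s in (0:ℝ)..t, Real.exp (a * s)
  | (n + 2), t => ∫ s in (0:ℝ)..t, Real.exp (-β * s) * nestInt β a (n + 1) s

/-- The iterated exponential integral
`I^ℓ_j(t) = β^ℓ ((j+ℓ-1)!/(j-1)!) e^{-βjt} ∫₀^t ∫₀^{s_ℓ} ⋯ ∫₀^{s_2}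
e^{-β(s_2+⋯+s_ℓ)} e^{β(j+ℓ-1)s_1} ds_1 ⋯ ds_ℓ`, with `I^0_j(t) = 1`. -/
noncomputable def Iex (β : ℝ) (j ℓ : ℕ) (t : ℝ) : ℝ :=
  if ℓ = 0 then 1
  else β ^ ℓ * ((Nat.factorial (j + ℓ - 1) : ℝ) / (Nat.factorial (j - 1) : ℝ)) *
    Real.exp (-(β * j * t)) * nestInt β (β * ((j : ℝ) + (ℓ : ℝ) - 1)) ℓ t

/-!
Replace `x_{j+ℓ}` by a constant upper bound `M` on `[0, t]` and solve the hierarchy with equality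
from the top down: the solution is `A^ℓ_j I^ℓ_j M + ∑_{k<ℓ} A^{k+1}_j I^{k+1}_j c_{j+k}` with
`c_k = r_k / (β α_k k)`, because `I^{ℓ+1}_j` vanishes at `0` and satisfies
`(I^{ℓ+1}_j)' = β j (I^ℓ_{j+1} - I^{ℓ+1}_j)`. Each `x_j` lies below this solution by Grönwall's
inequality for the difference, whose forcing term has a sign by induction on `ℓ`.
-/

theorem le_of_deriv_right_sub_le_mul_sub {f f' g g' : ℝ → ℝ} {a b K : ℝ}
    (hf : ContinuousOn f (Set.Icc a b))
    (hf' : ∀ s ∈ Set.Ico a b, HasDerivWithinAt f (f' s) (Set.Ici s) s)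
    (hg : ContinuousOn g (Set.Icc a b))
    (hg' : ∀ s ∈ Set.Ico a b, HasDerivWithinAt g (g' s) (Set.Ici s) s)
    (ha : f a ≤ g a) (bound : ∀ s ∈ Set.Ico a b, f' s - g' s ≤ K * (f s - g s)) :
    ∀ s ∈ Set.Icc a b, f s ≤ g s := by
  intro s hs
  have hgronwall : (f - g) s ≤ gronwallBound 0 K 0 (s - a) :=
    le_gronwallBound_of_liminf_deriv_right_le (f' := f' - g') (hf.sub hg)
      (fun u hu _ hr => ((hf' u hu).sub (hg' u hu)).liminf_right_slope_le hr)
      (sub_nonpos.2 ha) (fun u hu => (bound u hu).trans_eq (add_zero _).symm) s hs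
  rw [gronwallBound_ε0_δ0] at hgronwall
  exact sub_nonpos.1 hgronwall

theorem continuous_nestInt (β a : ℝ) : ∀ n, Continuous (nestInt β a n)
  | 0 => continuous_const
  | 1 => (intervalIntegral.differentiable_integral_of_continuous (by fun_prop)).continuous
  | n + 2 => by
    have hcont := continuous_nestInt β a (n + 1)
    exact (intervalIntegral.differentiable_integral_of_continuous (by fun_prop)).continuous

theorem hasDerivAt_nestInt_one (β a t : ℝ) :
    HasDerivAt (nestInt β a 1) (Real.exp (a * t)) t :=
  (Continuous.integral_hasStrictDerivAt (by fun_prop) 0 t).hasDerivAt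

theorem hasDerivAt_nestInt_add_two (β a : ℝ) (n : ℕ) (t : ℝ) :
    HasDerivAt (nestInt β a (n + 2)) (Real.exp (-β * t) * nestInt β a (n + 1) t) t := by
  have hcont := continuous_nestInt β a (n + 1)
  exact (Continuous.integral_hasStrictDerivAt (by fun_prop) 0 t).hasDerivAt

theorem nestInt_add_one_apply_zero (β a : ℝ) (n : ℕ) : nestInt β a (n + 1) 0 = 0 := by
  cases n <;> exact intervalIntegral.integral_same

theorem Iex_zero (β : ℝ) (j : ℕ) (t : ℝ) : Iex β j 0 t = 1 := if_pos rfl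

theorem Iex_add_one_apply_zero (β : ℝ) (j ℓ : ℕ) : Iex β j (ℓ + 1) 0 = 0 := by
  simp [Iex, nestInt_add_one_apply_zero]

theorem Iex_add_one (β : ℝ) {j : ℕ} (hj : 0 < j) (ℓ : ℕ) (t : ℝ) :
    Iex β j (ℓ + 1) t = β ^ (ℓ + 1) * j.ascFactorial (ℓ + 1) *
      (Real.exp (-(β * j) * t) * nestInt β (β * (j + ℓ)) (ℓ + 1) t) := by
  have hfact : ((j + (ℓ + 1) - 1).factorial : ℝ) / (j - 1).factorial
      = j.ascFactorial (ℓ + 1) := by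
    rw [← Nat.factorial_mul_ascFactorial' j (ℓ + 1) hj, Nat.cast_mul,
      mul_div_cancel_left₀ _ (by positivity)]
  have hrate : β * ((j : ℝ) + ((ℓ + 1 : ℕ) : ℝ) - 1) = β * (j + ℓ) := by push_cast; ring
  rw [Iex, if_neg ℓ.succ_ne_zero, hfact, hrate, neg_mul, mul_assoc (_ * _)]

theorem hasDerivAt_const_mul_exp_mul {f : ℝ → ℝ} {f' t : ℝ} (C K : ℝ) (hf : HasDerivAt f f' t) :
    HasDerivAt (fun s => C * (Real.exp (K * s) * f s))
      (C * (Real.exp (K * t) * f') + K * (C * (Real.exp (K * t) * f t))) t := by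
  have hexp : HasDerivAt (fun s => Real.exp (K * s)) (Real.exp (K * t) * K) t :=
    (hasDerivAt_const_mul K).exp
  exact ((hexp.mul hf).const_mul C).congr_deriv (by ring)

theorem hasDerivAt_Iex_one (β : ℝ) {j : ℕ} (hj : 0 < j) (t : ℝ) :
    HasDerivAt (Iex β j 1) (β * j * (1 - Iex β j 1 t)) t := by
  have hderiv := hasDerivAt_const_mul_exp_mul (β ^ 1 * j.ascFactorial 1) (-(β * j))
    (hasDerivAt_nestInt_one β (β * (j + (0 : ℕ))) t)
  rw [← funext (Iex_add_one β hj 0)] at hderiv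
  refine hderiv.congr_deriv ?_
  have hexp : Real.exp (-(β * j) * t) * Real.exp (β * (j + (0 : ℕ)) * t) = 1 := by
    rw [← Real.exp_add, Real.exp_eq_one_iff]
    push_cast
    ring
  rw [← Iex_add_one β hj, hexp, Nat.ascFactorial_succ, Nat.ascFactorial_zero]
  push_cast
  ring

theorem hasDerivAt_Iex_add_two (β : ℝ) {j : ℕ} (hj : 0 < j) (ℓ : ℕ) (t : ℝ) :
    HasDerivAt (Iex β j (ℓ + 2)) (β * j * (Iex β (j + 1) (ℓ + 1) t - Iex β j (ℓ + 2) t)) t := by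
  have hderiv := hasDerivAt_const_mul_exp_mul (β ^ (ℓ + 2) * j.ascFactorial (ℓ + 2)) (-(β * j))
    (hasDerivAt_nestInt_add_two β (β * (j + (ℓ + 1 : ℕ))) ℓ t)
  rw [← funext (Iex_add_one β hj (ℓ + 1))] at hderiv
  refine hderiv.congr_deriv ?_
  have hexp : Real.exp (-(β * j) * t) * Real.exp (-β * t)
      = Real.exp (-(β * (j + 1 : ℕ)) * t) := by
    rw [← Real.exp_add]
    push_cast
    ring_nf
  have hfact : (j.ascFactorial (ℓ + 2) : ℝ) = j * (j + 1).ascFactorial (ℓ + 1) := by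
    rw [Nat.ascFactorial_succ, ← Nat.succ_ascFactorial]
    push_cast
    rfl
  have hrate : β * ((j : ℝ) + (ℓ + 1 : ℕ)) = β * ((j + 1 : ℕ) + ℓ) := by push_cast; ring
  rw [← Iex_add_one β hj, ← mul_assoc (Real.exp _), hexp, hfact, hrate,
    Iex_add_one β j.succ_pos ℓ t]
  ring

theorem hasDerivAt_Iex_add_one (β : ℝ) {j : ℕ} (hj : 0 < j) (ℓ : ℕ) (t : ℝ) :
    HasDerivAt (Iex β j (ℓ + 1)) (β * j * (Iex β (j + 1) ℓ t - Iex β j (ℓ + 1) t)) t := by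
  cases ℓ with
  | zero => simpa only [Iex_zero] using hasDerivAt_Iex_one β hj t
  | succ ℓ => exact hasDerivAt_Iex_add_two β hj ℓ t

/-- The coefficient `A^k_j I^k_j(t)`, with `A^k_j = α_j ⋯ α_{j+k-1}`, through which a term at level
`j + k` of the hierarchy contributes to level `j`. -/
noncomputable def hierarchyCoeff (β : ℝ) (α : ℕ → ℝ) (j k : ℕ) (t : ℝ) : ℝ :=
  (∏ i ∈ Finset.range k, α (j + i)) * Iex β j k t

/-- The solution `y_j(t)` of `y_k' = β k (α_k (y_{k+1} + c_k) - y_k)`, `y_k(0) = 0` for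
`j ≤ k < j + ℓ`, closed at the top by `y_{j+ℓ} = M`. The source `r_k` of the paper is encoded as
`c_k = r_k / (β α_k k)`, so that `y_{k+1}` and `c_k` enter symmetrically. -/
noncomputable def hierarchyBound (β : ℝ) (α c : ℕ → ℝ) (M : ℝ) (j ℓ : ℕ) (t : ℝ) : ℝ :=
  hierarchyCoeff β α j ℓ t * M + ∑ k ∈ Finset.range ℓ, hierarchyCoeff β α j (k + 1) t * c (j + k)

section Hierarchy

variable (β : ℝ) (α : ℕ → ℝ)

theorem hierarchyCoeff_zero (j : ℕ) (t : ℝ) : hierarchyCoeff β α j 0 t = 1 := by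
  simp [hierarchyCoeff, Iex_zero]

theorem hierarchyCoeff_add_one_apply_zero (j k : ℕ) : hierarchyCoeff β α j (k + 1) 0 = 0 := by
  simp [hierarchyCoeff, Iex_add_one_apply_zero]

theorem hasDerivAt_hierarchyCoeff_add_one {j : ℕ} (hj : 0 < j) (k : ℕ) (t : ℝ) :
    HasDerivAt (hierarchyCoeff β α j (k + 1))
      (β * j * (α j * hierarchyCoeff β α (j + 1) k t - hierarchyCoeff β α j (k + 1) t)) t := by
  have hprod : ∏ i ∈ Finset.range (k + 1), α (j + i)
      = α j * ∏ i ∈ Finset.range k, α (j + 1 + i) := by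
    simp only [Finset.prod_range_succ', add_zero, mul_comm (α j), add_assoc, add_comm 1]
  refine ((hasDerivAt_Iex_add_one β hj k t).const_mul _).congr_deriv ?_
  rw [hierarchyCoeff, hierarchyCoeff, hprod]
  ring

variable (c : ℕ → ℝ) (M : ℝ)

theorem hierarchyBound_zero (j : ℕ) (t : ℝ) : hierarchyBound β α c M j 0 t = M := by
  simp [hierarchyBound, hierarchyCoeff_zero]

theorem hierarchyBound_add_one_apply_zero (j ℓ : ℕ) :
    hierarchyBound β α c M j (ℓ + 1) 0 = 0 := by
  simp [hierarchyBound, hierarchyCoeff_add_one_apply_zero]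

theorem hasDerivAt_hierarchyBound_add_one {j : ℕ} (hj : 0 < j) (ℓ : ℕ) (t : ℝ) :
    HasDerivAt (hierarchyBound β α c M j (ℓ + 1))
      (β * j * (α j * (hierarchyBound β α c M (j + 1) ℓ t + c j)
        - hierarchyBound β α c M j (ℓ + 1) t)) t := by
  have hcoeff (k : ℕ) := hasDerivAt_hierarchyCoeff_add_one β α hj k t
  refine (((hcoeff ℓ).mul_const M).add
    (HasDerivAt.fun_sum fun k _ => (hcoeff k).mul_const (c (j + k)))).congr_deriv ?_
  have hsource : ∑ k ∈ Finset.range (ℓ + 1), hierarchyCoeff β α (j + 1) k t * c (j + k)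
      = ∑ k ∈ Finset.range ℓ, hierarchyCoeff β α (j + 1) (k + 1) t * c (j + 1 + k) + c j := by
    simp only [Finset.sum_range_succ', hierarchyCoeff_zero, one_mul, add_zero, add_assoc,
      add_comm 1]
  have hsum : ∑ k ∈ Finset.range (ℓ + 1), β * j *
        (α j * hierarchyCoeff β α (j + 1) k t - hierarchyCoeff β α j (k + 1) t) * c (j + k)
      = β * j * (α j * ∑ k ∈ Finset.range (ℓ + 1), hierarchyCoeff β α (j + 1) k t * c (j + k)
        - ∑ k ∈ Finset.range (ℓ + 1), hierarchyCoeff β α j (k + 1) t * c (j + k)) := by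
    simp only [Finset.mul_sum, ← Finset.sum_sub_distrib]
    exact Finset.sum_congr rfl fun k _ => by ring
  rw [hsum, hsource, hierarchyBound, hierarchyBound]
  ring

end Hierarchy

theorem le_hierarchyBound {β T M : ℝ} (hβ : 0 ≤ β) {x x' : ℕ → ℝ → ℝ} {α c : ℕ → ℝ} {j ℓ : ℕ}
    (hj : 0 < j)
    (hx0 : ∀ k ∈ Set.Ico j (j + ℓ), x k 0 ≤ 0)
    (hα : ∀ k ∈ Set.Ico j (j + ℓ), 0 ≤ α k)
    (hcont : ∀ k ∈ Set.Ico j (j + ℓ), ContinuousOn (x k) (Set.Icc 0 T))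
    (hderiv : ∀ k ∈ Set.Ico j (j + ℓ), ∀ s ∈ Set.Ico 0 T,
      HasDerivWithinAt (x k) (x' k s) (Set.Ici s) s)
    (hineq : ∀ k ∈ Set.Ico j (j + ℓ), ∀ s ∈ Set.Ico 0 T,
      x' k s ≤ β * k * (α k * (x (k + 1) s + c k) - x k s))
    (htop : ∀ s ∈ Set.Icc 0 T, x (j + ℓ) s ≤ M) :
    ∀ s ∈ Set.Icc 0 T, x j s ≤ hierarchyBound β α c M j ℓ s := by
  induction ℓ generalizing j with
  | zero => simpa only [hierarchyBound_zero, add_zero] using htop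
  | succ ℓ ih =>
    have hjmem : j ∈ Set.Ico j (j + (ℓ + 1)) := ⟨le_rfl, by lia⟩
    have hsub : Set.Ico (j + 1) (j + 1 + ℓ) ⊆ Set.Ico j (j + (ℓ + 1)) :=
      Set.Ico_subset_Ico j.le_succ (by lia)
    have hnext : ∀ s ∈ Set.Icc 0 T, x (j + 1) s ≤ hierarchyBound β α c M (j + 1) ℓ s :=
      ih j.succ_pos (fun k hk => hx0 k (hsub hk)) (fun k hk => hα k (hsub hk))
        (fun k hk => hcont k (hsub hk)) (fun k hk => hderiv k (hsub hk))
        (fun k hk => hineq k (hsub hk)) (by rwa [add_assoc, add_comm 1])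
    have hbound (s : ℝ) := hasDerivAt_hierarchyBound_add_one β α c M hj ℓ s
    refine le_of_deriv_right_sub_le_mul_sub (K := -(β * j)) (hcont j hjmem) (hderiv j hjmem)
      (fun s _ => (hbound s).continuousAt.continuousWithinAt)
      (fun s _ => (hbound s).hasDerivWithinAt) ?_ fun s hs => ?_
    · rw [hierarchyBound_add_one_apply_zero]
      exact hx0 j hjmem
    · have hforcing : β * j * (α j * x (j + 1) s)
          ≤ β * j * (α j * hierarchyBound β α c M (j + 1) ℓ s) := by
        have hαj := hα j hjmem
        gcongr
        exact hnext s (Set.Ico_subset_Icc_self hs)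
      linarith [hineq j hjmem s hs]

theorem hierarchyBound_div_eq (β : ℝ) (α r : ℕ → ℝ) (M : ℝ) (j ℓ : ℕ) (t : ℝ) :
    hierarchyBound β α (fun k => r k / (β * (α k * k))) M j ℓ t =
      (∏ i ∈ Finset.range ℓ, α (j + i)) * Iex β j ℓ t * M
        + (1 / β) * ∑ k ∈ Finset.range ℓ,
            (∏ i ∈ Finset.range (k + 1), α (j + i)) * Iex β j (k + 1) t *
              (r (j + k) / (α (j + k) * ((j : ℝ) + k))) := by
  rw [hierarchyBound, hierarchyCoeff, Finset.mul_sum]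
  congr 1
  refine Finset.sum_congr rfl fun k _ => ?_
  rw [hierarchyCoeff, Nat.cast_add, div_mul_eq_div_div_swap, div_eq_mul_one_div _ β]
  ring

theorem ode_hierarchy_bound_general {β t : ℝ} (hβ : 0 < β) (ht : 0 ≤ t) {x x' : ℕ → ℝ → ℝ}
    {r α : ℕ → ℝ} {j ℓ : ℕ} (hj : 0 < j)
    (hx0 : ∀ k ∈ Set.Ico j (j + ℓ), x k 0 ≤ 0)
    (hα : ∀ k ∈ Set.Ico j (j + ℓ), 0 < α k)
    (hcont : ∀ k ∈ Set.Icc j (j + ℓ), ContinuousOn (x k) (Set.Icc 0 t))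
    (hderiv : ∀ k ∈ Set.Ico j (j + ℓ), ∀ s ∈ Set.Ico 0 t,
      HasDerivWithinAt (x k) (x' k s) (Set.Ici s) s)
    (hineq : ∀ k ∈ Set.Ico j (j + ℓ), ∀ s ∈ Set.Ico 0 t,
      x' k s ≤ β * k * (α k * x (k + 1) s - x k s) + r k) :
    x j t ≤ (∏ i ∈ Finset.range ℓ, α (j + i)) * Iex β j ℓ t *
        sSup (x (j + ℓ) '' Set.Icc 0 t)
      + (1 / β) * ∑ k ∈ Finset.range ℓ,
          (∏ i ∈ Finset.range (k + 1), α (j + i)) * Iex β j (k + 1) t *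
            (r (j + k) / (α (j + k) * ((j : ℝ) + k))) := by
  have htop : ∀ s ∈ Set.Icc 0 t, x (j + ℓ) s ≤ sSup (x (j + ℓ) '' Set.Icc 0 t) := fun s hs =>
    le_csSup (isCompact_Icc.bddAbove_image (hcont _ ⟨by lia, le_rfl⟩)) (Set.mem_image_of_mem _ hs)
  rw [← hierarchyBound_div_eq]
  refine le_hierarchyBound hβ.le hj hx0 (fun k hk => (hα k hk).le)
    (fun k hk => hcont k (Set.Ico_subset_Icc_self hk)) hderiv (fun k hk s hs => ?_) htop t
    (Set.right_mem_Icc.2 ht)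
  have hk0 : (k : ℝ) ≠ 0 := Nat.cast_ne_zero.2 (hj.trans_le hk.1).ne'
  have hαk := (hα k hk).ne'
  refine (hineq k hk s hs).trans_eq ?_
  field_simp
  ring

/-- Gronwall-type estimate for the ODE hierarchy
`x_k' ≤ βk(α_k x_{k+1} − x_k) + r_k`, `x_k(0) = 0`: for all `j, ℓ ≥ 1` and `t ≥ 0`,
`x_j(t) ≤ A^ℓ_j I^ℓ_j(t) sup_{[0,t]} x_{j+ℓ}
  + (1/β) Σ_{k=0}^{ℓ-1} A^{k+1}_j I^{k+1}_j(t) r_{j+k}/(α_{j+k}(j+k))`,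
where `A^k_j = Π_{i=j}^{j+k-1} α_i`. -/
theorem ode_hierarchy_bound (β : ℝ) (hβ : 0 < β) (x x' : ℕ → ℝ → ℝ) (r α : ℕ → ℝ)
    (hx0 : ∀ k, 1 ≤ k → x k 0 = 0)
    (hxnonneg : ∀ k, 1 ≤ k → ∀ t : ℝ, 0 ≤ t → 0 ≤ x k t)
    (hr : ∀ k, 1 ≤ k → 0 ≤ r k)
    (hα : ∀ k, 1 ≤ k → 0 < α k)
    (hderiv : ∀ k, 1 ≤ k → ∀ t : ℝ, 0 ≤ t → HasDerivWithinAt (x k) (x' k t) (Set.Ici 0) t)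
    (hineq : ∀ k, 1 ≤ k → ∀ t : ℝ, 0 ≤ t →
      x' k t ≤ β * k * (α k * x (k + 1) t - x k t) + r k)
    (j ℓ : ℕ) (hj : 1 ≤ j) (hℓ : 1 ≤ ℓ) (t : ℝ) (ht : 0 ≤ t) :
    x j t ≤ (∏ i ∈ Finset.range ℓ, α (j + i)) * Iex β j ℓ t *
        sSup (x (j + ℓ) '' Set.Icc 0 t)
      + (1 / β) * ∑ k ∈ Finset.range ℓ,
          (∏ i ∈ Finset.range (k + 1), α (j + i)) * Iex β j (k + 1) t *
            (r (j + k) / (α (j + k) * ((j : ℝ) + k))) := by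
  exact ode_hierarchy_bound_general hβ ht hj (fun k hk => (hx0 k (hj.trans hk.1)).le)
    (fun k hk => hα k (hj.trans hk.1))
    (fun k hk s hs => (hderiv k (hj.trans hk.1) s hs.1).continuousWithinAt.mono
      Set.Icc_subset_Ici_self)
    (fun k hk s hs => (hderiv k (hj.trans hk.1) s hs.1).mono (Set.Ici_subset_Ici.2 hs.1))
    fun k hk s hs => hineq k (hj.trans hk.1) s hs.1
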